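/- Let H be a finite graph that is bicycle-free at radius r. The number of singleton-free k-hikes in H whose hike graph is exactly H is at most (r·|V(H)|)^{⌈2k/r⌉}. -/

import Mathlib

open scoped Classical

noncomputable section

/-- The ball of radius `r` about `v` in `G` (within the connected component of `v`). -/
def gBall {V : Type*} (G : SimpleGraph V) (v : V) (r : ℕ) : Set V :=
  {u | G.Reachable v u ∧ G.dist v u ≤ r}

/-- `G` is bicycle-free at radius `r`: the subgraph induced on every ball of radius `r`
has at most as many edges as vertices. -/
def BicycleFree {V : Type*} (G : SimpleGraph V) (r : ℕ) : Prop :=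
  ∀ v : V,
    (G.edgeSet ∩ {e : Sym2 V | ∀ x ∈ e, x ∈ gBall G v r}).ncard ≤ (gBall G v r).ncard

/-- A `k`-hike in `G`: a closed walk `v₀, …, v_{2k}` with `v₀ = v_{2k}` in which every
step except possibly the `(k+1)`-st is non-backtracking. -/
def IsHike {V : Type*} (G : SimpleGraph V) (k : ℕ) (f : Fin (2 * k + 1) → V) : Prop :=
  (∀ (i : ℕ) (h : i < 2 * k), G.Adj (f ⟨i, by omega⟩) (f ⟨i + 1, by omega⟩)) ∧
  f ⟨2 * k, by omega⟩ = f ⟨0, by omega⟩ ∧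
  ∀ (i : ℕ) (h1 : 1 ≤ i) (h2 : i < 2 * k), i ≠ k → f ⟨i + 1, by omega⟩ ≠ f ⟨i - 1, by omega⟩

/-- The number of steps of the closed walk `f` traversing the undirected edge `e`. -/
def edgeCount {V : Type*} [DecidableEq V] (k : ℕ) (f : Fin (2 * k + 1) → V)
    (e : Sym2 V) : ℕ :=
  (Finset.univ.filter fun i : Fin (2 * k) =>
    s(f ⟨i.1, Nat.lt_succ_of_lt i.2⟩, f ⟨i.1 + 1, Nat.succ_lt_succ i.2⟩) = e).card

/-- A hike is singleton-free if no edge is traversed exactly once. -/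
def IsSingletonFree {V : Type*} [DecidableEq V] (k : ℕ) (f : Fin (2 * k + 1) → V) : Prop :=
  ∀ e : Sym2 V, edgeCount k f e ≠ 1

/-!
Split a `k`-hike at its midpoint into two non-backtracking walks of length `k`. A connected graph
with at most as many edges as vertices is a spanning tree plus at most one edge, so two vertices are
joined by at most two non-backtracking walks of a given length; bicycle-freeness transfers this
to all walks of length at most `r`. Cutting each half into pieces of length `r`, separated by free
choices of vertices, gives the bound when `⌈2k/r⌉` is even.

When `⌈2k/r⌉` is odd, each half has, next to the midpoint, a remaining piece of length `s ≤ r / 2`,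
and about one factor `|V|` has to be saved. A singleton-free hike traverses each edge of its hike
graph at least twice, so `|V| ≤ k + 1`; for `s ≥ 3` this is absorbed by the slack between the bounds
`2` and `r` for each piece, while for `s ≤ 2` a degree sum around the midpoint is needed as well.
If `2k ≤ r`, the graph itself has at most as many edges as vertices: it is a tree, a cycle, or it
has a leaf, at which the hike must start or turn around.
-/

section NonBacktracking

variable {V : Type*} {G : SimpleGraph V} {u v w : V}

/-- A walk is non-backtracking if it never traverses the same edge twice in a row. For walks in a
simple graph this is the condition `v_{i+1} ≠ v_{i-1}` on consecutive vertices. -/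
def IsNonBacktracking (p : G.Walk u v) : Prop :=
  p.edges.IsChain (· ≠ ·)

lemma IsNonBacktracking.of_append_left {p : G.Walk u v} {q : G.Walk v w}
    (h : IsNonBacktracking (p.append q)) : IsNonBacktracking p := by
  rw [IsNonBacktracking, SimpleGraph.Walk.edges_append] at h
  exact h.left_of_append

lemma IsNonBacktracking.of_append_right {p : G.Walk u v} {q : G.Walk v w}
    (h : IsNonBacktracking (p.append q)) : IsNonBacktracking q := by
  rw [IsNonBacktracking, SimpleGraph.Walk.edges_append] at h
  exact h.right_of_append

lemma IsNonBacktracking.of_cons {h : G.Adj u v} {p : G.Walk v w}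
    (hp : IsNonBacktracking (p.cons h)) : IsNonBacktracking p :=
  hp.tail

lemma IsNonBacktracking.ne_of_cons_cons {a b : V} {h : G.Adj a b} {h' : G.Adj b u}
    {p : G.Walk u v} (hp : IsNonBacktracking ((p.cons h').cons h)) : u ≠ a := by
  rintro rfl
  simp [IsNonBacktracking, Sym2.eq_swap] at hp

/-- The edges of the walk `p` all lie in `T`; this is the condition for transferring `p` to `T`. -/
abbrev StaysIn (T : SimpleGraph V) (p : G.Walk u v) : Prop :=
  ∀ e ∈ p.edges, e ∈ T.edgeSet

end NonBacktracking

section Acyclic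

variable {V : Type*} {G T : SimpleGraph V} {u v : V} {p q : G.Walk u v}

lemma IsNonBacktracking.isPath_transfer (hT : T.IsAcyclic) (hp : IsNonBacktracking p)
    (hpT : StaysIn T p) : (p.transfer T hpT).IsPath := by
  rw [hT.isPath_iff_isChain, SimpleGraph.Walk.edges_transfer]
  exact hp

lemma IsNonBacktracking.length_eq_dist (hT : T.IsAcyclic) (hp : IsNonBacktracking p)
    (hpT : StaysIn T p) : p.length = T.dist u v := by
  obtain ⟨s, hs, hlen⟩ := (p.transfer T hpT).reachable.exists_path_of_dist
  have heq : (⟨p.transfer T hpT, hp.isPath_transfer hT hpT⟩ : T.Path u v) = ⟨s, hs⟩ :=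
    (hT.subsingleton_path u v).elim _ _
  rw [← hlen, ← congrArg (·.1.length) heq, SimpleGraph.Walk.length_transfer]

lemma IsNonBacktracking.eq_of_staysIn (hT : T.IsAcyclic) (hp : IsNonBacktracking p)
    (hq : IsNonBacktracking q) (hpT : StaysIn T p) (hqT : StaysIn T q) : p = q := by
  have heq : (⟨p.transfer T hpT, hp.isPath_transfer hT hpT⟩ : T.Path u v) =
      ⟨q.transfer T hqT, hq.isPath_transfer hT hqT⟩ := (hT.subsingleton_path u v).elim _ _
  apply SimpleGraph.Walk.ext_support
  simpa only [SimpleGraph.Walk.support_transfer] using congrArg (·.1.support) heq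

end Acyclic

section OneWay

variable {V : Type*} {G T : SimpleGraph V} {u v x y : V}

/-- The walk `p` stays in `T` except that it may cross from `x` to `y`, in this direction only. -/
def IsOneWay (T : SimpleGraph V) (x y : V) (p : G.Walk u v) : Prop :=
  ∀ d ∈ p.darts, T.Adj d.fst d.snd ∨ d.fst = x ∧ d.snd = y

lemma StaysIn.isOneWay {p : G.Walk u v} (hp : StaysIn T p) : IsOneWay T x y p :=
  fun d hd => .inl (hp d.edge (List.mem_map_of_mem hd))

lemma IsOneWay.exists_first_crossing {p : G.Walk u v} (hp : IsOneWay T x y p)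
    (hpT : ¬ StaysIn T p) :
    ∃ (p₁ : G.Walk u x) (h : G.Adj x y) (p₂ : G.Walk y v),
      p = p₁.append (p₂.cons h) ∧ StaysIn T p₁ ∧ IsOneWay T x y p₂ := by
  induction p with
  | nil => simp [StaysIn] at hpT
  | @cons a b c h p ih =>
    obtain ⟨hab, hp⟩ := List.forall_mem_cons.mp hp
    by_cases hT : T.Adj a b
    · have hpT' : ¬ StaysIn T p := fun hs => hpT (List.forall_mem_cons.mpr ⟨hT, hs⟩)
      obtain ⟨p₁, hxy, p₂, rfl, hp₁, hp₂⟩ := ih hp hpT'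
      exact ⟨p₁.cons h, hxy, p₂, rfl, List.forall_mem_cons.mpr ⟨hT, hp₁⟩, hp₂⟩
    · obtain ⟨rfl, rfl⟩ : a = x ∧ b = y := hab.resolve_left hT
      exact ⟨.nil, h, p, rfl, by simp [StaysIn], hp⟩

lemma IsOneWay.dist_le_length (hT : T.IsAcyclic) {p : G.Walk y v} (hp : IsNonBacktracking p)
    (hway : IsOneWay T x y p) : T.dist y v ≤ p.length := by
  induction hn : p.length using Nat.strong_induction_on generalizing p with
  | _ n ih =>
    by_cases hpT : StaysIn T p
    · exact hn ▸ (hp.length_eq_dist hT hpT).ge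
    · obtain ⟨p₁, h, p₂, rfl, -, hway₂⟩ := hway.exists_first_crossing hpT
      simp only [SimpleGraph.Walk.length_append, SimpleGraph.Walk.length_cons] at hn
      exact (ih _ (by omega) hp.of_append_right.of_cons hway₂ rfl).trans (by omega)

lemma IsOneWay.crossing_le_length (hT : T.IsAcyclic) {p : G.Walk u v} (hp : IsNonBacktracking p)
    (hway : IsOneWay T x y p) (hpT : ¬ StaysIn T p) :
    T.dist u x + 1 + T.dist y v ≤ p.length := by
  obtain ⟨p₁, h, p₂, rfl, hp₁, hway₂⟩ := hway.exists_first_crossing hpT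
  have hlen₁ := hp.of_append_left.length_eq_dist hT hp₁
  have hlen₂ := hway₂.dist_le_length hT hp.of_append_right.of_cons
  simp only [SimpleGraph.Walk.length_append, SimpleGraph.Walk.length_cons]
  omega

-- All crossing walks start with the same path to `x`, so comparing them reduces to walks from `y`,
-- where one that stays in `T` is too short to compete with one that crosses.
lemma IsOneWay.eq_of_length_eq (hT : T.IsAcyclic) {p q : G.Walk u v}
    (hp : IsNonBacktracking p) (hq : IsNonBacktracking q) (hpway : IsOneWay T x y p)
    (hqway : IsOneWay T x y q) (hu : u = y ∨ ¬ StaysIn T p ∧ ¬ StaysIn T q)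
    (hlen : p.length = q.length) : p = q := by
  induction hn : p.length using Nat.strong_induction_on generalizing u p q with
  | _ n ih =>
    by_cases hpT : StaysIn T p <;> by_cases hqT : StaysIn T q
    · exact hp.eq_of_staysIn hT hq hpT hqT
    · obtain rfl : u = y := by tauto
      have := hqway.crossing_le_length hT hq hqT
      have := hp.length_eq_dist hT hpT
      omega
    · obtain rfl : u = y := by tauto
      have := hpway.crossing_le_length hT hp hpT
      have := hq.length_eq_dist hT hqT
      omega
    · obtain ⟨p₁, h, p₂, rfl, hp₁, hpway₂⟩ := hpway.exists_first_crossing hpT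
      obtain ⟨q₁, _, q₂, rfl, hq₁, hqway₂⟩ := hqway.exists_first_crossing hqT
      obtain rfl : p₁ = q₁ := hp.of_append_left.eq_of_staysIn hT hq.of_append_left hp₁ hq₁
      simp only [SimpleGraph.Walk.length_append, SimpleGraph.Walk.length_cons] at hlen hn
      rw [ih _ (by omega) hp.of_append_right.of_cons hq.of_append_right.of_cons hpway₂ hqway₂
        (.inl rfl) (by omega) rfl]

end OneWay

section Unicyclic

variable {V : Type*} {G T : SimpleGraph V} {u v w x y : V}

lemma IsOneWay.cons_or (hT : T.IsAcyclic) {h : G.Adj u v} {p : G.Walk v w}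
    (hp : IsNonBacktracking (p.cons h)) (hway : IsOneWay T x y p)
    (huv : T.Adj u v ∨ s(u, v) = s(x, y)) :
    IsOneWay T x y (p.cons h) ∨ IsOneWay T y x (p.cons h) := by
  by_cases hyx : u = y ∧ v = x
  · obtain ⟨rfl, rfl⟩ := hyx
    by_cases hpT : StaysIn T p
    · exact .inr (List.forall_mem_cons.mpr ⟨.inr ⟨rfl, rfl⟩, hpT.isOneWay⟩)
    · obtain ⟨p₁, h', p₂, rfl, hp₁, -⟩ := hway.exists_first_crossing hpT
      have hnil : p₁.length = 0 := by
        rw [hp.of_cons.of_append_left.length_eq_dist hT hp₁, SimpleGraph.dist_self]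
      rw [SimpleGraph.Walk.eq_nil_iff_nil.mpr (SimpleGraph.Walk.length_eq_zero_iff.mp hnil)] at hp
      exact absurd rfl hp.ne_of_cons_cons
  · refine .inl (List.forall_mem_cons.mpr ⟨?_, hway⟩)
    rw [Sym2.eq_iff] at huv
    tauto

lemma IsNonBacktracking.isOneWay_or (hT : T.IsAcyclic)
    (hG : ∀ a b, G.Adj a b → T.Adj a b ∨ s(a, b) = s(x, y)) {p : G.Walk u v}
    (hp : IsNonBacktracking p) : IsOneWay T x y p ∨ IsOneWay T y x p := by
  induction p with
  | nil => simp [IsOneWay]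
  | cons h p ih =>
    rcases ih hp.of_cons with hway | hway
    · exact hway.cons_or hT hp (hG _ _ h)
    · exact (hway.cons_or hT hp (Sym2.eq_swap (a := y) ▸ hG _ _ h)).symm

lemma IsOneWay.not_length_eq (hT : T.IsTree) {p q s : G.Walk u v}
    (hp : IsNonBacktracking p) (hq : IsNonBacktracking q) (hs : IsNonBacktracking s)
    (hpT : StaysIn T p) (hqT : ¬ StaysIn T q) (hsT : ¬ StaysIn T s)
    (hqway : IsOneWay T x y q) (hsway : IsOneWay T y x s) :
    ¬ (p.length = q.length ∧ p.length = s.length) := by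
  have hstay := hp.length_eq_dist hT.isAcyclic hpT
  have hforward := hqway.crossing_le_length hT.isAcyclic hq hqT
  have hbackward := hsway.crossing_le_length hT.isAcyclic hs hsT
  have hx := hT.connected.dist_triangle (u := u) (v := x) (w := v)
  have hy := hT.connected.dist_triangle (u := u) (v := y) (w := v)
  omega

-- A walk stays in `T`, crosses `xy` forwards, or crosses it backwards. Each class has at most one
-- member of a given length, and no length occurs in all three classes.
lemma IsNonBacktracking.eq_or_eq_or_eq_of_isTree (hT : T.IsTree)
    (hG : ∀ a b, G.Adj a b → T.Adj a b ∨ s(a, b) = s(x, y)) {p q s : G.Walk u v}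
    (hp : IsNonBacktracking p) (hq : IsNonBacktracking q) (hs : IsNonBacktracking s)
    (hpq : p.length = q.length) (hps : p.length = s.length) : p = q ∨ p = s ∨ q = s := by
  have stay_unique {p q : G.Walk u v} (hp : IsNonBacktracking p) (hq : IsNonBacktracking q) :
      StaysIn T p → StaysIn T q → p = q :=
    hp.eq_of_staysIn hT.isAcyclic hq
  have cross_unique {a b : V} {p q : G.Walk u v} (hp : IsNonBacktracking p)
      (hq : IsNonBacktracking q) (hlen : p.length = q.length) (hpT : ¬ StaysIn T p)
      (hqT : ¬ StaysIn T q) (hpway : IsOneWay T a b p) (hqway : IsOneWay T a b q) : p = q :=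
    hpway.eq_of_length_eq hT.isAcyclic hp hq hqway (.inr ⟨hpT, hqT⟩) hlen
  have hpway := hp.isOneWay_or hT.isAcyclic hG
  have hqway := hq.isOneWay_or hT.isAcyclic hG
  have hsway := hs.isOneWay_or hT.isAcyclic hG
  by_cases hpT : StaysIn T p <;> by_cases hqT : StaysIn T q <;> by_cases hsT : StaysIn T s <;>
    grind [IsOneWay.not_length_eq]

lemma exists_isTree_adj_or_eq [Finite V] (hG : G.Connected)
    (hcard : G.edgeSet.ncard ≤ Nat.card V) :
    ∃ (T : SimpleGraph V) (x y : V), T.IsTree ∧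
      ∀ a b, G.Adj a b → T.Adj a b ∨ s(a, b) = s(x, y) := by
  obtain ⟨T, hTG, hT⟩ := hG.exists_isTree_le
  have hTcard : T.edgeSet.ncard + 1 = Nat.card V :=
    (SimpleGraph.isTree_iff_connected_and_card.mp hT).2
  have hextra : (G.edgeSet \ T.edgeSet).ncard ≤ 1 := by
    rw [Set.ncard_sdiff (SimpleGraph.edgeSet_subset_edgeSet.mpr hTG)]
    omega
  have : Nonempty (Sym2 V) := hG.nonempty.map Sym2.diag
  obtain ⟨e, he⟩ := (Set.ncard_le_one_iff_subset_singleton).mp hextra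
  induction e with
  | _ x y =>
    refine ⟨T, x, y, hT, fun a b hab => or_iff_not_imp_left.mpr fun hTab => ?_⟩
    exact he ⟨hab, hTab⟩

lemma IsNonBacktracking.eq_or_eq_or_eq [Finite V] (hG : G.Connected)
    (hcard : G.edgeSet.ncard ≤ Nat.card V) {p q s : G.Walk u v}
    (hp : IsNonBacktracking p) (hq : IsNonBacktracking q) (hs : IsNonBacktracking s)
    (hpq : p.length = q.length) (hps : p.length = s.length) : p = q ∨ p = s ∨ q = s := by
  obtain ⟨T, x, y, hT, hTG⟩ := exists_isTree_adj_or_eq hG hcard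
  exact hp.eq_or_eq_or_eq_of_isTree hT hTG hq hs hpq hps

end Unicyclic

section Ball

variable {V : Type*} {G : SimpleGraph V} {r : ℕ} {u v : V}

lemma mem_gBall_of_mem_support {p : G.Walk u v} (hp : p.length ≤ r) {w : V}
    (hw : w ∈ p.support) : w ∈ gBall G u r :=
  ⟨(p.takeUntil w hw).reachable,
    (SimpleGraph.dist_le _).trans ((p.length_takeUntil_le_length hw).trans hp)⟩

lemma induce_gBall_connected (G : SimpleGraph V) (u : V) (r : ℕ) :
    (G.induce (gBall G u r)).Connected := by
  refine SimpleGraph.induce_connected_of_patches u ⟨.refl u, by simp⟩ ?_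
  rintro v ⟨hv, hdist⟩
  obtain ⟨p, hp⟩ := hv.exists_walk_length_eq_dist
  exact ⟨{z | z ∈ p.support}, fun z hz => mem_gBall_of_mem_support (hp.trans_le hdist) hz,
    p.start_mem_support, p.end_mem_support, p.connected_induce_support _ _⟩

lemma BicycleFree.ncard_edgeSet_induce_gBall_le [Finite V] (hbf : BicycleFree G r) (u : V) :
    (G.induce (gBall G u r)).edgeSet.ncard ≤ Nat.card (gBall G u r) := by
  rw [Nat.card_coe_set_eq]
  refine le_trans ?_ (hbf u)
  refine Set.ncard_le_ncard_of_injOn (Sym2.map Subtype.val) (fun e he => ?_)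
    (Sym2.map.injective Subtype.val_injective).injOn
  induction e with
  | _ a b =>
    refine ⟨he, fun x hx => ?_⟩
    rcases Sym2.mem_iff.mp hx with rfl | rfl
    exacts [a.2, b.2]

lemma IsNonBacktracking.induce {s : Set V} {p : G.Walk u v} (hp : IsNonBacktracking p)
    (hs : ∀ w ∈ p.support, w ∈ s) : IsNonBacktracking (p.induce s hs) := by
  refine List.IsChain.imp (fun e e' hne heq => hne (congrArg (Sym2.map Subtype.val) heq))
    ((List.isChain_map (Sym2.map Subtype.val)).mp (?_ : List.IsChain (· ≠ ·) _))
  have hmap := congrArg SimpleGraph.Walk.edges (p.map_induce hs)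
  rw [SimpleGraph.Walk.edges_map] at hmap
  exact hmap ▸ hp

lemma BicycleFree.eq_or_eq_or_eq [Finite V] (hbf : BicycleFree G r) {p q s : G.Walk u v}
    (hp : IsNonBacktracking p) (hq : IsNonBacktracking q) (hs : IsNonBacktracking s)
    (hpr : p.length ≤ r) (hpq : p.length = q.length) (hps : p.length = s.length) :
    p = q ∨ p = s ∨ q = s := by
  have hpB : ∀ w ∈ p.support, w ∈ gBall G u r := fun w => mem_gBall_of_mem_support hpr
  have hqB : ∀ w ∈ q.support, w ∈ gBall G u r := fun w => mem_gBall_of_mem_support (hpq ▸ hpr)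
  have hsB : ∀ w ∈ s.support, w ∈ gBall G u r := fun w => mem_gBall_of_mem_support (hps ▸ hpr)
  have length_induce {p : G.Walk u v} (hpB : ∀ w ∈ p.support, w ∈ gBall G u r) :
      (p.induce _ hpB).length = p.length :=
    (SimpleGraph.Walk.length_map _ _).symm.trans
      (congrArg SimpleGraph.Walk.length (p.map_induce hpB))
  rw [← p.map_induce hpB, ← q.map_induce hqB, ← s.map_induce hsB]
  exact ((hp.induce hpB).eq_or_eq_or_eq (induce_gBall_connected G u r)
    (hbf.ncard_edgeSet_induce_gBall_le u) (hq.induce hqB) (hs.induce hsB)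
    (by simpa only [length_induce] using hpq) (by simpa only [length_induce] using hps)).imp
      (congrArg _) (Or.imp (congrArg _) (congrArg _))

end Ball

section Handshake

variable {V : Type*} [Fintype V] {G : SimpleGraph V} {r : ℕ}

lemma sum_degree_sub_one_le (hG : G.Connected) (hcard : G.edgeSet.ncard ≤ Nat.card V) :
    ∑ v, (G.degree v - 1) ≤ Fintype.card V := by
  rcases subsingleton_or_nontrivial V with _ | _
  · simp
  · have hsum : ∑ v, (G.degree v - 1) + Fintype.card V = 2 * G.edgeSet.ncard := by
      rw [← Finset.card_univ, Finset.card_eq_sum_ones, ← Finset.sum_add_distrib,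
        ← SimpleGraph.coe_edgeFinset, Set.ncard_coe_finset,
        ← G.sum_degrees_eq_twice_card_edges]
      exact Finset.sum_congr rfl fun v _ =>
        Nat.sub_add_cancel (hG.preconnected.degree_pos_of_nontrivial v)
    rw [Nat.card_eq_fintype_card] at hcard
    omega

lemma BicycleFree.sum_degree_sub_one_le (hbf : BicycleFree G r) (hr : 2 ≤ r) (u : V) :
    ∑ v ∈ G.neighborFinset u, (G.degree v - 1) ≤ Fintype.card V := by
  have hmem {v : V} (hv : G.Adj u v) : v ∈ gBall G u r :=
    mem_gBall_of_mem_support (p := hv.toWalk) (by simp; omega) (by simp)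
  have hmem₂ {v w : V} (hv : G.Adj u v) (hw : G.Adj v w) : w ∈ gBall G u r :=
    mem_gBall_of_mem_support (p := hw.toWalk.cons hv) (by simpa using hr) (by simp)
  have hdeg (v : gBall G u r) (hv : G.Adj u v) :
      (G.induce (gBall G u r)).degree v = G.degree v := by
    apply SimpleGraph.degree_induce_of_neighborSet_subset
    exact fun w hw => hmem₂ hv hw
  calc ∑ v ∈ G.neighborFinset u, (G.degree v - 1)
      = ∑ v ∈ (G.neighborFinset u).subtype (· ∈ gBall G u r), (G.degree v - 1) :=
        (Finset.sum_subtype_of_mem _ fun v hv => hmem (by simpa using hv)).symm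
    _ = ∑ v ∈ (G.neighborFinset u).subtype (· ∈ gBall G u r),
          ((G.induce (gBall G u r)).degree v - 1) :=
        Finset.sum_congr rfl fun v hv => by rw [hdeg v (by simpa using hv)]
    _ ≤ ∑ v, ((G.induce (gBall G u r)).degree v - 1) :=
        Finset.sum_le_univ_sum_of_nonneg fun _ => Nat.zero_le _
    _ ≤ Fintype.card (gBall G u r) :=
        _root_.sum_degree_sub_one_le (induce_gBall_connected G u r)
          (hbf.ncard_edgeSet_induce_gBall_le u)
    _ ≤ Fintype.card V := Fintype.card_subtype_le _

end Handshake

section Counting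

variable {V : Type*} [Fintype V] {G : SimpleGraph V} {u v : V} {l : ℕ}

/-- The non-backtracking walks of length `l` from `u` to `v`. -/
def nonBacktrackingWalks (G : SimpleGraph V) (l : ℕ) (u v : V) : Finset (G.Walk u v) :=
  (G.finsetWalkLength l u v).filter IsNonBacktracking

/-- The number of non-backtracking walks of length `l` from `u` to `v`. -/
def nbCount (G : SimpleGraph V) (l : ℕ) (u v : V) : ℕ :=
  (nonBacktrackingWalks G l u v).card

lemma mem_nonBacktrackingWalks {p : G.Walk u v} :
    p ∈ nonBacktrackingWalks G l u v ↔ p.length = l ∧ IsNonBacktracking p := by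
  rw [nonBacktrackingWalks, Finset.mem_filter, SimpleGraph.mem_finsetWalkLength_iff]

lemma nbCount_add_le (G : SimpleGraph V) (a b : ℕ) (u v : V) :
    nbCount G (a + b) u v ≤ ∑ w, nbCount G a u w * nbCount G b w v := by
  simp only [nbCount, ← Finset.card_product, ← Finset.card_sigma]
  refine Finset.card_le_card_of_surjOn (fun x => x.2.1.append x.2.2) fun p hp => ?_
  obtain ⟨hlen, hp⟩ := mem_nonBacktrackingWalks.mp hp
  rw [← p.append_take_drop_eq a] at hp
  refine ⟨⟨p.getVert a, p.take a, p.drop a⟩, ?_, p.append_take_drop_eq a⟩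
  simp only [Finset.coe_sigma, Set.mem_sigma_iff, Finset.mem_coe, Finset.mem_univ, true_and,
    Finset.mem_product, mem_nonBacktrackingWalks, SimpleGraph.Walk.take_length,
    SimpleGraph.Walk.drop_length]
  exact ⟨⟨by omega, hp.of_append_left⟩, by omega, hp.of_append_right⟩

lemma nbCount_zero_le (G : SimpleGraph V) (u v : V) : nbCount G 0 u v ≤ 1 := by
  refine Finset.card_le_one.mpr fun p hp q hq => ?_
  match p, (mem_nonBacktrackingWalks.mp hp).1, q, (mem_nonBacktrackingWalks.mp hq).1 with
  | .nil, _, .nil, _ => rfl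

lemma nbCount_one_le (G : SimpleGraph V) (u v : V) :
    nbCount G 1 u v ≤ if G.Adj u v then 1 else 0 := by
  split_ifs with huv
  · refine Finset.card_le_one.mpr fun p hp q hq => ?_
    match p, (mem_nonBacktrackingWalks.mp hp).1, q, (mem_nonBacktrackingWalks.mp hq).1 with
    | .cons _ .nil, _, .cons _ .nil, _ => rfl
  · simp only [nbCount, Nat.le_zero, Finset.card_eq_zero, Finset.eq_empty_iff_forall_notMem,
      mem_nonBacktrackingWalks]
    exact fun p hp => huv (SimpleGraph.Walk.adj_of_length_eq_one hp.1)

lemma nbCount_two_self (G : SimpleGraph V) (u : V) : nbCount G 2 u u = 0 := by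
  simp only [nbCount, Finset.card_eq_zero, Finset.eq_empty_iff_forall_notMem,
    mem_nonBacktrackingWalks]
  rintro p ⟨hlen, hp⟩
  match p, hlen with
  | .cons h (.cons h' .nil), _ => exact hp.ne_of_cons_cons rfl

lemma sum_nbCount_one_mul_le (G : SimpleGraph V) (u : V) (f : V → ℕ) :
    ∑ v, nbCount G 1 u v * f v ≤ ∑ v ∈ G.neighborFinset u, f v := by
  rw [SimpleGraph.neighborFinset_eq_filter, Finset.sum_filter]
  refine Finset.sum_le_sum fun v _ => ?_
  have hle := Nat.mul_le_mul_right (f v) (nbCount_one_le G u v)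
  split_ifs at hle ⊢ <;> omega

lemma sum_nbCount_one_le (G : SimpleGraph V) (u : V) : ∑ v, nbCount G 1 u v ≤ G.degree u := by
  simpa using sum_nbCount_one_mul_le G u 1

lemma sum_nbCount_two_le (G : SimpleGraph V) (u : V) :
    ∑ v, nbCount G 2 u v ≤ ∑ w ∈ G.neighborFinset u, (G.degree w - 1) := by
  have hsum {w : V} (hw : w ∈ G.neighborFinset u) :
      ∑ v ∈ Finset.univ.erase u, nbCount G 1 w v ≤ G.degree w - 1 := by
    calc ∑ v ∈ Finset.univ.erase u, nbCount G 1 w v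
        ≤ ∑ v ∈ Finset.univ.erase u, if G.Adj w v then 1 else 0 :=
          Finset.sum_le_sum fun v _ => nbCount_one_le G w v
      _ = ((G.neighborFinset w).erase u).card := by
          rw [Finset.sum_boole, Nat.cast_id, SimpleGraph.neighborFinset_eq_filter,
            Finset.filter_erase]
      _ = G.degree w - 1 := by
          rw [Finset.card_erase_of_mem (by simpa [SimpleGraph.adj_comm] using hw),
            SimpleGraph.card_neighborFinset_eq_degree]
  calc ∑ v, nbCount G 2 u v
      = ∑ v ∈ Finset.univ.erase u, nbCount G 2 u v :=
        (Finset.sum_erase _ (nbCount_two_self G u)).symm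
    _ ≤ ∑ v ∈ Finset.univ.erase u, ∑ w, nbCount G 1 u w * nbCount G 1 w v :=
        Finset.sum_le_sum fun v _ => nbCount_add_le G 1 1 u v
    _ = ∑ w, nbCount G 1 u w * ∑ v ∈ Finset.univ.erase u, nbCount G 1 w v := by
        rw [Finset.sum_comm]
        simp only [Finset.mul_sum]
    _ ≤ ∑ w ∈ G.neighborFinset u, ∑ v ∈ Finset.univ.erase u, nbCount G 1 w v :=
        sum_nbCount_one_mul_le G u _
    _ ≤ ∑ w ∈ G.neighborFinset u, (G.degree w - 1) :=
        Finset.sum_le_sum fun w hw => hsum hw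

-- Cut off pieces of length `r` one at a time.
lemma nbCount_le_pow_mul_pow {C r : ℕ} (hC : ∀ l ≤ r, ∀ u v, nbCount G l u v ≤ C) (m : ℕ)
    (hl : l ≤ (m + 1) * r) (u v : V) :
    nbCount G l u v ≤ C ^ (m + 1) * Fintype.card V ^ m := by
  induction m generalizing l u with
  | zero => simpa using hC l (by omega) u v
  | succ m ih =>
    have hle : l - min l r ≤ (m + 1) * r := by
      rw [add_mul _ 1, one_mul] at hl
      omega
    calc nbCount G l u v
        = nbCount G (min l r + (l - min l r)) u v := by congr 1; omega
      _ ≤ ∑ w, nbCount G (min l r) u w * nbCount G (l - min l r) w v := nbCount_add_le ..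
      _ ≤ ∑ _w : V, C * (C ^ (m + 1) * Fintype.card V ^ m) :=
          Finset.sum_le_sum fun w _ => Nat.mul_le_mul (hC _ (min_le_right _ _) u w) (ih hle w)
      _ = C ^ (m + 1 + 1) * Fintype.card V ^ (m + 1) := by
          rw [Finset.sum_const, Finset.card_univ, smul_eq_mul]
          ring

end Counting

section BicycleFreeCounting

variable {V : Type*} [Fintype V] {G : SimpleGraph V} {l r : ℕ}

lemma BicycleFree.nbCount_le_two (hbf : BicycleFree G r) (hl : l ≤ r) (u v : V) :
    nbCount G l u v ≤ 2 := by
  by_contra! hcard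
  obtain ⟨p, hp, q, hq, s, hs, hpq, hps, hqs⟩ := Finset.two_lt_card.mp hcard
  simp only [mem_nonBacktrackingWalks] at hp hq hs
  rcases hbf.eq_or_eq_or_eq hp.2 hq.2 hs.2 (hp.1.trans_le hl) (hp.1.trans hq.1.symm)
    (hp.1.trans hs.1.symm) with h | h | h
  exacts [hpq h, hps h, hqs h]

lemma BicycleFree.nbCount_le_radius (hbf : BicycleFree G r) (hr : 1 ≤ r) (hl : l ≤ r) (u v : V) :
    nbCount G l u v ≤ r := by
  obtain rfl | hr := hr.eq_or_lt
  · have hone := nbCount_one_le G u v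
    have hzero := nbCount_zero_le G u v
    interval_cases l <;> split_ifs at hone <;> omega
  · exact (hbf.nbCount_le_two hl u v).trans hr

end BicycleFreeCounting

section Hike

variable {V : Type*} {G : SimpleGraph V} {u v : V} {k : ℕ} {f : Fin (2 * k + 1) → V}

lemma isNonBacktracking_of_getVert_ne {p : G.Walk u v}
    (hp : ∀ i, i + 2 ≤ p.length → p.getVert (i + 2) ≠ p.getVert i) : IsNonBacktracking p := by
  induction p with
  | nil => simp [IsNonBacktracking]
  | cons h p ih =>
    have hchain := ih fun i hi => by simpa using hp (i + 1) (by simpa using hi)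
    refine List.IsChain.cons hchain fun e he heq => ?_
    cases p with
    | nil => simp at he
    | cons h' p =>
      obtain rfl : s(_, _) = e := by simpa using he
      rcases Sym2.eq_iff.mp heq with ⟨huv, -⟩ | ⟨huw, -⟩
      · exact h.ne huv
      · exact hp 0 (by simp) (by simpa using huw.symm)

lemma exists_walk_getVert_eq {n : ℕ} (f : Fin (n + 1) → V)
    (hf : ∀ i : Fin n, G.Adj (f i.castSucc) (f i.succ)) :
    ∃ p : G.Walk (f 0) (f (Fin.last n)), p.length = n ∧ ∀ i : Fin (n + 1), p.getVert i = f i := by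
  induction n with
  | zero => exact ⟨.nil, rfl, fun i => by rw [Fin.fin_one_eq_zero i]; rfl⟩
  | succ n ih =>
    obtain ⟨p, hlen, hp⟩ := ih (fun i => f i.succ) fun i => hf i.succ
    exact ⟨p.cons (hf 0), congrArg (· + 1) hlen, Fin.cases rfl hp⟩

lemma IsHike.exists_walk (hf : IsHike G k f) :
    ∃ p : G.Walk (f 0) (f 0), p.length = 2 * k ∧ ∀ i : Fin (2 * k + 1), p.getVert i = f i := by
  obtain ⟨p, hlen, hp⟩ := exists_walk_getVert_eq f fun i => hf.1 i i.2
  exact ⟨p.copy rfl hf.2.1, (p.length_copy rfl hf.2.1).trans hlen,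
    fun i => (p.getVert_copy i rfl hf.2.1).trans (hp i)⟩

lemma IsHike.exists_nonBacktracking_walks (hf : IsHike G k f) :
    ∃ (p : G.Walk (f 0) (f ⟨k, by omega⟩)) (q : G.Walk (f ⟨k, by omega⟩) (f 0)),
      (p.length = k ∧ IsNonBacktracking p) ∧ (q.length = k ∧ IsNonBacktracking q) ∧
        ∀ i : Fin (2 * k + 1), (p.append q).getVert i = f i := by
  obtain ⟨w, hlen, hw⟩ := hf.exists_walk
  have hmid : w.getVert k = f ⟨k, by omega⟩ := hw ⟨k, by omega⟩
  have hturn (i : ℕ) (hi : i + 2 ≤ 2 * k) (hik : i + 1 ≠ k) : w.getVert (i + 2) ≠ w.getVert i := by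
    have := hf.2.2 (i + 1) (by omega) (by omega) hik
    rwa [← hw ⟨i + 1 + 1, by omega⟩, ← hw ⟨i + 1 - 1, by omega⟩] at this
  refine ⟨(w.take k).copy rfl hmid, (w.drop k).copy hmid rfl, ⟨?_, ?_⟩, ⟨?_, ?_⟩, fun i => ?_⟩
  · simp [hlen]; omega
  · refine isNonBacktracking_of_getVert_ne fun i hi => ?_
    simp only [SimpleGraph.Walk.length_copy, SimpleGraph.Walk.take_length] at hi
    simp only [SimpleGraph.Walk.getVert_copy, SimpleGraph.Walk.take_getVert,
      min_eq_right (show i + 2 ≤ k by omega), min_eq_right (show i ≤ k by omega)]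
    exact hturn i (by omega) (by omega)
  · simp [hlen]; omega
  · refine isNonBacktracking_of_getVert_ne fun i hi => ?_
    simp only [SimpleGraph.Walk.length_copy, SimpleGraph.Walk.drop_length] at hi
    simp only [SimpleGraph.Walk.getVert_copy, SimpleGraph.Walk.drop_getVert, ← add_assoc]
    exact hturn (k + i) (by omega) (by omega)
  · rw [SimpleGraph.Walk.append_copy_copy, SimpleGraph.Walk.getVert_copy, w.append_take_drop_eq]
    exact hw i

lemma ncard_hikes_le_sum [Fintype V] (G : SimpleGraph V) (k : ℕ) (P : Finset (V × V)) :
    {f : Fin (2 * k + 1) → V | IsHike G k f ∧ (f 0, f ⟨k, by omega⟩) ∈ P}.ncard ≤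
      ∑ x ∈ P, nbCount G k x.1 x.2 * nbCount G k x.2 x.1 := by
  let halves := P.sigma fun x =>
    nonBacktrackingWalks G k x.1 x.2 ×ˢ nonBacktrackingWalks G k x.2 x.1
  have hcard : halves.card = ∑ x ∈ P, nbCount G k x.1 x.2 * nbCount G k x.2 x.1 := by
    simp only [halves, nbCount, Finset.card_sigma, Finset.card_product]
  rw [← hcard, ← Set.ncard_coe_finset]
  refine (Set.ncard_le_ncard ?_).trans (Set.ncard_image_le
    (f := fun x (i : Fin (2 * k + 1)) => (x.2.1.append x.2.2).getVert i))
  rintro f ⟨hf, hfP⟩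
  obtain ⟨p, q, hp, hq, hpq⟩ := hf.exists_nonBacktracking_walks
  refine ⟨⟨(f 0, f ⟨k, by omega⟩), p, q⟩, ?_, funext hpq⟩
  simp only [halves, Finset.coe_sigma, Set.mem_sigma_iff, Finset.mem_coe, Finset.mem_product,
    mem_nonBacktrackingWalks]
  exact ⟨hfP, hp, hq⟩

end Hike

section FullHikes

variable {V : Type*} [DecidableEq V] {G : SimpleGraph V} {k : ℕ} {f : Fin (2 * k + 1) → V}

/-- The singleton-free `k`-hikes whose hike graph is all of `G`. -/
def fullHikes (G : SimpleGraph V) (k : ℕ) : Set (Fin (2 * k + 1) → V) :=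
  {f | IsHike G k f ∧ IsSingletonFree k f ∧ Set.range f = Set.univ ∧
    {e : Sym2 V | 0 < edgeCount k f e} = G.edgeSet}

lemma gBall_eq_univ_of_mem_fullHikes (hf : f ∈ fullHikes G k) :
    gBall G (f 0) (2 * k) = Set.univ := by
  obtain ⟨w, hlen, hw⟩ := hf.1.exists_walk
  refine Set.eq_univ_of_forall fun v => ?_
  obtain ⟨i, rfl⟩ := hf.2.2.1.ge (Set.mem_univ v)
  exact mem_gBall_of_mem_support hlen.le (hw i ▸ w.getVert_mem_support i)

lemma connected_of_mem_fullHikes (hf : f ∈ fullHikes G k) : G.Connected := by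
  refine SimpleGraph.connected_iff_exists_forall_reachable G |>.mpr ⟨f 0, fun v => ?_⟩
  exact ((gBall_eq_univ_of_mem_fullHikes hf).ge (Set.mem_univ v)).1

lemma ncard_edgeSet_le_of_mem_fullHikes [Finite V] (hf : f ∈ fullHikes G k) :
    G.edgeSet.ncard ≤ k := by
  have := Fintype.ofFinite V
  obtain ⟨hhike, hsf, -, hedges⟩ := hf
  have htwice : ∀ e ∈ G.edgeFinset, 2 ≤ edgeCount k f e := fun e he => by
    have hpos : 0 < edgeCount k f e := hedges.ge (SimpleGraph.mem_edgeFinset.mp he)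
    have hne := hsf e
    omega
  have htotal : ∑ e ∈ G.edgeFinset, edgeCount k f e = 2 * k := by
    simp only [edgeCount]
    rw [← Finset.card_eq_sum_card_fiberwise, Finset.card_univ, Fintype.card_fin]
    exact fun i _ => by simpa using hhike.1 i i.2
  have hsum := Finset.card_nsmul_le_sum _ _ _ htwice
  rw [htotal, smul_eq_mul] at hsum
  rw [← SimpleGraph.coe_edgeFinset, Set.ncard_coe_finset]
  omega

lemma card_le_succ_of_mem_fullHikes [Fintype V] (hf : f ∈ fullHikes G k) :
    Fintype.card V ≤ k + 1 := by
  have hcard := (connected_of_mem_fullHikes hf).card_vert_le_card_edgeSet_add_one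
  have hedges := ncard_edgeSet_le_of_mem_fullHikes hf
  rw [Nat.card_eq_fintype_card, Nat.card_coe_set_eq] at hcard
  omega

lemma eq_or_eq_of_mem_fullHikes_of_degree_le_one [Fintype V] (hf : f ∈ fullHikes G k) {x : V}
    (hx : G.degree x ≤ 1) : f 0 = x ∨ f ⟨k, by omega⟩ = x := by
  obtain ⟨⟨i, hi⟩, rfl⟩ := hf.2.2.1.ge (Set.mem_univ x)
  obtain ⟨hadj, hclosed, hturn⟩ := hf.1
  by_contra! hends
  have h0 : i ≠ 0 := by rintro rfl; exact hends.1 rfl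
  have hk : i ≠ k := by rintro rfl; exact hends.2 rfl
  have h2k : i ≠ 2 * k := by rintro rfl; exact hends.1 hclosed.symm
  refine hturn i (by omega) (by omega) hk ?_
  rw [← SimpleGraph.card_neighborFinset_eq_degree, Finset.card_le_one] at hx
  refine hx _ ?_ _ ?_
  · simpa using hadj i (by omega)
  · have := hadj (i - 1) (by omega)
    simp only [Nat.sub_add_cancel (Nat.pos_of_ne_zero h0)] at this
    simpa using this.symm

lemma ncard_fullHikes_le_sum [Fintype V] (G : SimpleGraph V) (k : ℕ) :
    (fullHikes G k).ncard ≤ ∑ u, ∑ v, nbCount G k u v * nbCount G k v u := by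
  rw [← Fintype.sum_prod_type' fun u v => nbCount G k u v * nbCount G k v u]
  refine (Set.ncard_le_ncard fun f hf => ?_).trans (ncard_hikes_le_sum G k Finset.univ)
  exact ⟨hf.1, Finset.mem_univ _⟩

end FullHikes

section DegreeAtMostTwo

variable {V : Type*} [Fintype V] {G : SimpleGraph V}

lemma eq_of_adj_of_degree_le_two {a b c d : V} (hdeg : G.degree b ≤ 2) (ha : G.Adj b a)
    (hc : G.Adj b c) (hd : G.Adj b d) (hca : c ≠ a) (hda : d ≠ a) : c = d := by
  by_contra hcd
  rw [← SimpleGraph.card_neighborFinset_eq_degree] at hdeg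
  refine hdeg.not_gt (Finset.two_lt_card.mpr ⟨a, ?_, c, ?_, d, ?_, hca.symm, hda.symm, hcd⟩) <;>
    simpa

lemma IsNonBacktracking.support_eq_of_degree_le_two (hdeg : ∀ v, G.degree v ≤ 2) {a b v w : V}
    {h : G.Adj a b} {p : G.Walk b v} {q : G.Walk b w} (hp : IsNonBacktracking (p.cons h))
    (hq : IsNonBacktracking (q.cons h)) (hlen : p.length = q.length) :
    p.support = q.support := by
  induction p generalizing a with
  | nil =>
    match q, hlen with
    | .nil, _ => rfl
  | cons hbc p ih =>
    match q, hlen with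
    | .cons hbd q, hlen =>
      obtain rfl := eq_of_adj_of_degree_le_two (hdeg _) h.symm hbc hbd hp.ne_of_cons_cons
        hq.ne_of_cons_cons
      rw [SimpleGraph.Walk.support_cons, SimpleGraph.Walk.support_cons,
        ih hp.of_cons hq.of_cons (by simpa using hlen)]

lemma sum_nbCount_le_two_of_degree_le_two (hdeg : ∀ v, G.degree v ≤ 2) {l : ℕ} (hl : 1 ≤ l)
    (u : V) : ∑ v, nbCount G l u v ≤ 2 := by
  refine le_trans ?_ (hdeg u)
  simp only [nbCount, ← Finset.card_sigma, ← SimpleGraph.card_neighborFinset_eq_degree]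
  refine Finset.card_le_card_of_injOn (fun x => x.2.snd) ?_ ?_
  · rintro ⟨v, p⟩ hp
    simp only [Finset.coe_sigma, Set.mem_sigma_iff, Finset.mem_coe,
      mem_nonBacktrackingWalks] at hp
    have hnil : ¬ p.Nil := fun hnil => by have := hnil.length_eq_zero; omega
    simpa using p.adj_snd hnil
  · rintro ⟨v, p⟩ hp ⟨w, q⟩ hq hsnd
    simp only [Finset.coe_sigma, Set.mem_sigma_iff, Finset.mem_coe,
      mem_nonBacktrackingWalks] at hp hq
    obtain ⟨-, rfl, hp⟩ := hp
    obtain ⟨-, hlen, hq⟩ := hq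
    match p, q with
    | .cons hub p, .cons huc q =>
      obtain rfl : _ = _ := by simpa using hsnd
      have hsupp := hp.support_eq_of_degree_le_two hdeg hq (by simpa using hlen.symm)
      obtain rfl : v = w := by
        rw [← p.getLast_support, ← q.getLast_support]
        simp only [hsupp]
      rw [SimpleGraph.Walk.ext_support hsupp]

end DegreeAtMostTwo

section LongHikes

variable {V : Type*} [Fintype V] {G : SimpleGraph V} {r s : ℕ}

lemma sum_nbCount_mul_le {D X m : ℕ} (hD : ∀ u v, nbCount G m u v ≤ D)
    (hX : ∀ a, ∑ v, nbCount G s a v * ∑ b, nbCount G s v b ≤ X) :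
    ∑ u, ∑ v, nbCount G (m + s) u v * nbCount G (m + s) v u ≤
      Fintype.card V ^ 2 * D ^ 2 * X := by
  have hout (u v : V) : nbCount G (m + s) u v ≤ D * ∑ a, nbCount G s a v := by
    rw [Finset.mul_sum]
    exact (nbCount_add_le G m s u v).trans
      (Finset.sum_le_sum fun a _ => Nat.mul_le_mul_right _ (hD u a))
  have hback (u v : V) : nbCount G (m + s) v u ≤ D * ∑ b, nbCount G s v b := by
    rw [Finset.mul_sum, add_comm]
    exact (nbCount_add_le G s m v u).trans
      (Finset.sum_le_sum fun b _ => mul_comm D _ ▸ Nat.mul_le_mul_left _ (hD b u))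
  calc ∑ u, ∑ v, nbCount G (m + s) u v * nbCount G (m + s) v u
      ≤ ∑ _u : V, ∑ v, (D * ∑ a, nbCount G s a v) * (D * ∑ b, nbCount G s v b) :=
        Finset.sum_le_sum fun u _ => Finset.sum_le_sum fun v _ =>
          Nat.mul_le_mul (hout u v) (hback u v)
    _ = Fintype.card V * D ^ 2 * ∑ v, (∑ a, nbCount G s a v) * ∑ b, nbCount G s v b := by
        simp only [mul_mul_mul_comm D, ← sq, ← Finset.mul_sum, Finset.sum_const,
          Finset.card_univ, smul_eq_mul]
        ring
    _ = Fintype.card V * D ^ 2 * ∑ a, ∑ v, nbCount G s a v * ∑ b, nbCount G s v b := by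
        rw [Finset.sum_comm]
        simp only [Finset.sum_mul]
    _ ≤ Fintype.card V * D ^ 2 * ∑ _a : V, X :=
        Nat.mul_le_mul_left _ (Finset.sum_le_sum fun a _ => hX a)
    _ = Fintype.card V ^ 2 * D ^ 2 * X := by
        rw [Finset.sum_const, Finset.card_univ, smul_eq_mul]
        ring

lemma sum_nbCount_mul_sum_le_sq {Y : ℕ} (hY : ∀ a, ∑ v, nbCount G s a v ≤ Y) (a : V) :
    ∑ v, nbCount G s a v * ∑ b, nbCount G s v b ≤ Y ^ 2 :=
  calc ∑ v, nbCount G s a v * ∑ b, nbCount G s v b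
      ≤ ∑ v, nbCount G s a v * Y := Finset.sum_le_sum fun v _ => Nat.mul_le_mul_left _ (hY v)
    _ = (∑ v, nbCount G s a v) * Y := (Finset.sum_mul ..).symm
    _ ≤ Y ^ 2 := sq Y ▸ Nat.mul_le_mul_right _ (hY a)

lemma BicycleFree.sum_nbCount_one_mul_sum_le (hbf : BicycleFree G r) (hr : 2 ≤ r) (a : V) :
    ∑ v, nbCount G 1 a v * ∑ b, nbCount G 1 v b ≤ 2 * Fintype.card V :=
  calc ∑ v, nbCount G 1 a v * ∑ b, nbCount G 1 v b
      ≤ ∑ v ∈ G.neighborFinset a, ∑ b, nbCount G 1 v b := sum_nbCount_one_mul_le G a _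
    _ ≤ ∑ v ∈ G.neighborFinset a, (G.degree v - 1 + 1) :=
        Finset.sum_le_sum fun v _ => (sum_nbCount_one_le G v).trans (by omega)
    _ = ∑ v ∈ G.neighborFinset a, (G.degree v - 1) + G.degree a := by
        rw [Finset.sum_add_distrib, Finset.sum_const, smul_eq_mul, mul_one,
          SimpleGraph.card_neighborFinset_eq_degree]
    _ ≤ 2 * Fintype.card V := by
        have := hbf.sum_degree_sub_one_le hr a
        have := G.degree_lt_card_verts a
        omega

lemma BicycleFree.sum_nbCount_le (hbf : BicycleFree G r) (hs : s ≤ r) (u : V) :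
    ∑ v, nbCount G s u v ≤ 2 * Fintype.card V := by
  rw [mul_comm, ← smul_eq_mul, ← Finset.card_univ]
  exact Finset.sum_le_card_nsmul _ _ _ fun v _ => hbf.nbCount_le_two hs u v

lemma BicycleFree.ncard_fullHikes_le_of_le_mul [DecidableEq V] (hbf : BicycleFree G r)
    (hr : 1 ≤ r) {k m : ℕ} (hk : k ≤ (m + 1) * r) :
    (fullHikes G k).ncard ≤ (r * Fintype.card V) ^ (2 * m + 2) := by
  have hle (u v : V) : nbCount G k u v ≤ r ^ (m + 1) * Fintype.card V ^ m :=
    nbCount_le_pow_mul_pow (fun _ hl => hbf.nbCount_le_radius hr hl) m hk u v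
  calc (fullHikes G k).ncard
      ≤ ∑ u, ∑ v, nbCount G k u v * nbCount G k v u := ncard_fullHikes_le_sum G k
    _ ≤ ∑ _u : V, ∑ _v : V, (r ^ (m + 1) * Fintype.card V ^ m) ^ 2 :=
        Finset.sum_le_sum fun u _ => Finset.sum_le_sum fun v _ =>
          sq (r ^ (m + 1) * _) ▸ Nat.mul_le_mul (hle u v) (hle v u)
    _ = (r * Fintype.card V) ^ (2 * m + 2) := by
        simp only [Finset.sum_const, Finset.card_univ, smul_eq_mul]
        ring

lemma BicycleFree.ncard_fullHikes_le_of_four_pow_mul_le [DecidableEq V] (hbf : BicycleFree G r)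
    {X m : ℕ} (hX : ∀ a, ∑ v, nbCount G s a v * ∑ b, nbCount G s v b ≤ X)
    (hXr : 4 ^ (m + 1) * X ≤ r ^ (2 * m + 3) * Fintype.card V) :
    (fullHikes G ((m + 1) * r + s)).ncard ≤ (r * Fintype.card V) ^ (2 * m + 3) :=
  calc (fullHikes G ((m + 1) * r + s)).ncard
      ≤ ∑ u, ∑ v, nbCount G ((m + 1) * r + s) u v * nbCount G ((m + 1) * r + s) v u :=
        ncard_fullHikes_le_sum G _
    _ ≤ Fintype.card V ^ 2 * (2 ^ (m + 1) * Fintype.card V ^ m) ^ 2 * X :=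
        sum_nbCount_mul_le
          (nbCount_le_pow_mul_pow (fun _ hl => hbf.nbCount_le_two hl) m le_rfl) hX
    _ = Fintype.card V ^ (2 * m + 2) * (4 ^ (m + 1) * X) := by
        rw [show 4 = 2 ^ 2 by rfl, ← pow_mul]
        ring
    _ ≤ Fintype.card V ^ (2 * m + 2) * (r ^ (2 * m + 3) * Fintype.card V) :=
        Nat.mul_le_mul_left _ hXr
    _ = (r * Fintype.card V) ^ (2 * m + 3) := by ring

lemma pow_mul_le_pow_of_mul_eq_sq {a b c m r x : ℕ} (hab : a * b = c ^ 2) (hc : c ≤ r)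
    (hx : x ≤ b ^ (m + 1) * r) : a ^ (m + 1) * x ≤ r ^ (2 * m + 3) :=
  calc a ^ (m + 1) * x ≤ a ^ (m + 1) * (b ^ (m + 1) * r) := Nat.mul_le_mul_left _ hx
    _ = c ^ (2 * (m + 1)) * r := by rw [← mul_assoc, ← mul_pow, hab, pow_mul]
    _ ≤ r ^ (2 * (m + 1)) * r := Nat.mul_le_mul_right _ (Nat.pow_le_pow_left hc _)
    _ = r ^ (2 * m + 3) := by ring

lemma BicycleFree.ncard_fullHikes_mul_add_le [DecidableEq V] (hbf : BicycleFree G r)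
    (hs : 1 ≤ s) (hsr : 2 * s ≤ r) (m : ℕ) :
    (fullHikes G ((m + 1) * r + s)).ncard ≤ (r * Fintype.card V) ^ (2 * m + 3) := by
  obtain hempty | ⟨f, hf⟩ := (fullHikes G ((m + 1) * r + s)).eq_empty_or_nonempty
  · simp [hempty]
  have hcard := card_le_succ_of_mem_fullHikes hf
  obtain rfl | rfl | hs3 : s = 1 ∨ s = 2 ∨ 3 ≤ s := by omega
  · refine hbf.ncard_fullHikes_le_of_four_pow_mul_le
      (hbf.sum_nbCount_one_mul_sum_le (by omega)) ?_
    rw [← mul_assoc]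
    exact Nat.mul_le_mul_right _ (pow_mul_le_pow_of_mul_eq_sq (b := 1) (c := 2) rfl (by omega)
      (by simpa using hsr))
  · refine hbf.ncard_fullHikes_le_of_four_pow_mul_le (sum_nbCount_mul_sum_le_sq fun a =>
      (sum_nbCount_two_le G a).trans (hbf.sum_degree_sub_one_le (by omega) a)) ?_
    rw [sq, ← mul_assoc]
    have hpow : m + 2 ≤ 4 ^ (m + 1) := Nat.lt_pow_self (by omega)
    refine Nat.mul_le_mul_right _ (pow_mul_le_pow_of_mul_eq_sq (b := 4) (c := 4) rfl (by omega) ?_)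
    exact le_trans (by linarith) (Nat.mul_le_mul_right r hpow)
  · refine hbf.ncard_fullHikes_le_of_four_pow_mul_le (sum_nbCount_mul_sum_le_sq fun a =>
      hbf.sum_nbCount_le (by omega) a) ?_
    rw [mul_pow, sq (Fintype.card V), ← mul_assoc (2 ^ 2), ← mul_assoc]
    have hpow : 1 + (m + 1) * 8 ≤ 9 ^ (m + 1) :=
      one_add_le_pow_of_two_add_nonneg (Nat.zero_le (2 + 8)) (m + 1)
    refine Nat.mul_le_mul_right _ (pow_mul_le_pow_of_mul_eq_sq (b := 9) (c := 6) rfl (by omega) ?_)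
    exact le_trans (by nlinarith) (Nat.mul_le_mul_right r hpow)

end LongHikes

section ShortHikes

variable {V : Type*} [Fintype V] {G : SimpleGraph V} {k r : ℕ}

lemma nbCount_le_one_of_isAcyclic (hG : G.IsAcyclic) (l : ℕ) (u v : V) : nbCount G l u v ≤ 1 := by
  refine Finset.card_le_one.mpr fun p hp q hq => ?_
  rw [mem_nonBacktrackingWalks] at hp hq
  exact hp.2.eq_of_staysIn hG hq.2 p.edges_subset_edgeSet q.edges_subset_edgeSet

lemma exists_degree_le_one (hcard : G.edgeSet.ncard ≤ Fintype.card V) {w : V}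
    (hw : 2 < G.degree w) : ∃ x, G.degree x ≤ 1 := by
  by_contra! hdeg
  have hsum : ∑ _v : V, 2 < ∑ v, G.degree v :=
    Finset.sum_lt_sum (fun v _ => hdeg v) ⟨w, Finset.mem_univ w, hw⟩
  rw [G.sum_degrees_eq_twice_card_edges, Finset.sum_const, smul_eq_mul, Finset.card_univ,
    ← Set.ncard_coe_finset, SimpleGraph.coe_edgeFinset] at hsum
  omega

lemma three_le_card_of_not_isAcyclic (hG : ¬ G.IsAcyclic) : 3 ≤ Fintype.card V := by
  simp only [SimpleGraph.IsAcyclic, not_forall, not_not] at hG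
  obtain ⟨v, c, hc⟩ := hG
  have hnodup := hc.support_nodup.length_le_card
  have := hc.three_le_length
  simp only [List.length_tail, SimpleGraph.Walk.length_support] at hnodup
  omega

lemma card_le_ncard_edgeSet_of_not_isAcyclic (hG : G.Connected) (hcycle : ¬ G.IsAcyclic) :
    Fintype.card V ≤ G.edgeSet.ncard := by
  by_contra! hlt
  have hle := hG.card_vert_le_card_edgeSet_add_one
  refine hcycle (SimpleGraph.isTree_iff_connected_and_card.mpr ⟨hG, ?_⟩).isAcyclic
  rw [Nat.card_coe_set_eq, Nat.card_eq_fintype_card] at hle ⊢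
  omega

lemma ncard_fullHikes_le_sq_of_isAcyclic [DecidableEq V] (hG : G.IsAcyclic) (k : ℕ) :
    (fullHikes G k).ncard ≤ Fintype.card V ^ 2 :=
  calc (fullHikes G k).ncard
      ≤ ∑ u, ∑ v, nbCount G k u v * nbCount G k v u := ncard_fullHikes_le_sum G k
    _ ≤ ∑ _u : V, ∑ _v : V, 1 * 1 := Finset.sum_le_sum fun u _ => Finset.sum_le_sum fun v _ =>
        Nat.mul_le_mul (nbCount_le_one_of_isAcyclic hG k u v) (nbCount_le_one_of_isAcyclic hG k v u)
    _ = Fintype.card V ^ 2 := by simp [sq]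

lemma BicycleFree.ncard_fullHikes_le_of_degree_le_two [DecidableEq V] (hbf : BicycleFree G r)
    (hkr : k ≤ r) (hk : 1 ≤ k) (hdeg : ∀ v, G.degree v ≤ 2) :
    (fullHikes G k).ncard ≤ 4 * Fintype.card V :=
  calc (fullHikes G k).ncard
      ≤ ∑ u, ∑ v, nbCount G k u v * nbCount G k v u := ncard_fullHikes_le_sum G k
    _ ≤ ∑ u, ∑ v, nbCount G k u v * 2 := Finset.sum_le_sum fun u _ => Finset.sum_le_sum fun v _ =>
        Nat.mul_le_mul_left _ (hbf.nbCount_le_two hkr v u)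
    _ = ∑ u, (∑ v, nbCount G k u v) * 2 := by simp only [Finset.sum_mul]
    _ ≤ ∑ _u : V, 2 * 2 := Finset.sum_le_sum fun u _ =>
        Nat.mul_le_mul_right _ (sum_nbCount_le_two_of_degree_le_two hdeg hk u)
    _ = 4 * Fintype.card V := by simp [mul_comm]

-- A full hike visits `x` only where it may backtrack: at its start or at its midpoint.
lemma BicycleFree.ncard_fullHikes_le_of_degree_le_one [DecidableEq V] (hbf : BicycleFree G r)
    (hkr : k ≤ r) {x : V} (hx : G.degree x ≤ 1) :
    (fullHikes G k).ncard ≤ 8 * Fintype.card V := by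
  let P : Finset (V × V) := {x} ×ˢ Finset.univ ∪ Finset.univ ×ˢ {x}
  have hcard : P.card ≤ 2 * Fintype.card V :=
    (Finset.card_union_le _ _).trans (by simp [two_mul])
  calc (fullHikes G k).ncard
      ≤ {f : Fin (2 * k + 1) → V | IsHike G k f ∧ (f 0, f ⟨k, by omega⟩) ∈ P}.ncard :=
        Set.ncard_le_ncard fun f hf =>
          ⟨hf.1, by simpa [P, eq_comm] using eq_or_eq_of_mem_fullHikes_of_degree_le_one hf hx⟩
    _ ≤ ∑ y ∈ P, nbCount G k y.1 y.2 * nbCount G k y.2 y.1 := ncard_hikes_le_sum G k P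
    _ ≤ ∑ _y ∈ P, 2 * 2 := Finset.sum_le_sum fun y _ =>
        Nat.mul_le_mul (hbf.nbCount_le_two hkr _ _) (hbf.nbCount_le_two hkr _ _)
    _ ≤ 8 * Fintype.card V := by
        rw [Finset.sum_const, smul_eq_mul]
        omega

lemma BicycleFree.ncard_edgeSet_le_card_of_mem_fullHikes [DecidableEq V] (hbf : BicycleFree G r)
    (hkr : 2 * k ≤ r) {f : Fin (2 * k + 1) → V} (hf : f ∈ fullHikes G k) :
    G.edgeSet.ncard ≤ Fintype.card V := by
  have huniv : gBall G (f 0) r = Set.univ := Set.eq_univ_of_forall fun v =>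
    ((gBall_eq_univ_of_mem_fullHikes hf).ge (Set.mem_univ v)).imp_right hkr.trans'
  simpa [huniv, Set.ncard_univ] using hbf (f 0)

lemma BicycleFree.ncard_fullHikes_le_of_two_mul_le [DecidableEq V] (hbf : BicycleFree G r)
    (hr : 1 ≤ r) (hkr : 2 * k ≤ r) : (fullHikes G k).ncard ≤ r * Fintype.card V := by
  obtain hempty | ⟨f, hf⟩ := (fullHikes G k).eq_empty_or_nonempty
  · simp [hempty]
  by_cases hG : G.IsAcyclic
  · have hcard := card_le_succ_of_mem_fullHikes hf
    refine (ncard_fullHikes_le_sq_of_isAcyclic hG k).trans ?_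
    rw [sq]
    exact Nat.mul_le_mul_right _ (by omega)
  have hcard : Fintype.card V ≤ k :=
    (card_le_ncard_edgeSet_of_not_isAcyclic (connected_of_mem_fullHikes hf) hG).trans
      (ncard_edgeSet_le_of_mem_fullHikes hf)
  by_cases hdeg : ∀ v, G.degree v ≤ 2
  · have := three_le_card_of_not_isAcyclic hG
    exact (hbf.ncard_fullHikes_le_of_degree_le_two (by omega) (by omega) hdeg).trans
      (Nat.mul_le_mul_right _ (by omega))
  · push Not at hdeg
    obtain ⟨w, hw⟩ := hdeg
    obtain ⟨x, hx⟩ := exists_degree_le_one (hbf.ncard_edgeSet_le_card_of_mem_fullHikes hkr hf) hw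
    have := G.degree_lt_card_verts w
    exact (hbf.ncard_fullHikes_le_of_degree_le_one (by omega) hx).trans
      (Nat.mul_le_mul_right _ (by omega))

end ShortHikes

lemma fullHikes_zero_subsingleton {V : Type*} [DecidableEq V] (G : SimpleGraph V) :
    (fullHikes G 0).Subsingleton := by
  intro f hf g _
  have : Subsingleton (Fin (2 * 0 + 1)) := inferInstanceAs (Subsingleton (Fin 1))
  have := (Set.range_eq_univ.mp hf.2.2.1).subsingleton
  exact Subsingleton.elim f g

theorem BicycleFree.ncard_fullHikes_le {V : Type*} [Fintype V] [DecidableEq V] {G : SimpleGraph V}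
    {k r M : ℕ} (hbf : BicycleFree G r) (hr : 1 ≤ r) (hM : 2 * k ≤ r * M) :
    (fullHikes G k).ncard ≤ (r * Fintype.card V) ^ M := by
  obtain hempty | ⟨f, hf⟩ := (fullHikes G k).eq_empty_or_nonempty
  · simp [hempty]
  have hcard : 0 < Fintype.card V := Fintype.card_pos_iff.mpr ⟨f 0⟩
  have hmono {m : ℕ} (hm : m ≤ M) : (r * Fintype.card V) ^ m ≤ (r * Fintype.card V) ^ M :=
    Nat.pow_le_pow_right (Nat.mul_pos hr hcard) hm
  obtain ⟨q, rfl | rfl⟩ := M.even_or_odd'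
  · obtain _ | m := q
    · obtain rfl : k = 0 := by simpa using hM
      simpa using fullHikes_zero_subsingleton G
    · exact hbf.ncard_fullHikes_le_of_le_mul hr (by linarith)
  · obtain _ | m := q
    · simpa using hbf.ncard_fullHikes_le_of_two_mul_le hr (by simpa using hM)
    · obtain hk | hk := le_or_gt k ((m + 1) * r)
      · exact (hbf.ncard_fullHikes_le_of_le_mul hr hk).trans (hmono (by omega))
      · obtain ⟨s, rfl⟩ := Nat.exists_eq_add_of_lt hk
        exact hbf.ncard_fullHikes_mul_add_le (s := s + 1) (by omega) (by linarith) m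

/-- The number of singleton-free `k`-hikes whose hike graph is all of `H` is at most
`(r·|V(H)|)^⌈2k/r⌉`, when `H` is bicycle-free at radius `r`. -/
theorem stmt8 {V : Type*} [Fintype V] [DecidableEq V] (G : SimpleGraph V)
    {r k : ℕ} (hr : 1 ≤ r) (hbf : BicycleFree G r) :
    ({f : Fin (2 * k + 1) → V | IsHike G k f ∧ IsSingletonFree k f ∧
        Set.range f = Set.univ ∧
        {e : Sym2 V | 0 < edgeCount k f e} = G.edgeSet}.ncard : ℝ)
      ≤ ((r * Fintype.card V : ℕ) : ℝ) ^ ⌈(2 * k : ℝ) / (r : ℝ)⌉ := by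
  have hr' : (0 : ℝ) < r := by exact_mod_cast hr
  obtain ⟨M, hM⟩ := Int.eq_ofNat_of_zero_le (Int.ceil_nonneg (by positivity : 0 ≤ (2 * k : ℝ) / r))
  have hkM : 2 * k ≤ r * M := by
    have hle := Int.le_ceil ((2 * k : ℝ) / r)
    rw [hM, div_le_iff₀' hr'] at hle
    exact_mod_cast hle
  rw [hM, zpow_natCast]
  exact_mod_cast hbf.ncard_fullHikes_le hr hkM
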